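/- Let k be a differential field of characteristic zero whose field of constants C is algebraically closed, let k ⊂ K ⊆ E be differential fields such that E is a Picard–Vessiot extension of k (for some monic linear differential operator over k) and K is a k-irreducible differential field. Then there exist a nonzero element y ∈ E and a monic linear differential operator L over k such that L(y) = 0, the element y′/y lies in K, and K is a finite algebraic extension of the differential subfield k⟨y′/y⟩. -/

import Mathlib

universe u

/-- A bundled differential field of characteristic zero: a field together with a derivation,
given as a raw function satisfying additivity and the Leibniz rule. -/
structure DFld : Type (u + 1) where
  carrier : Type u
  [fieldInst : Field carrier]
  [charZeroInst : CharZero carrier]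
  deriv : carrier → carrier
  deriv_add : ∀ a b, deriv (a + b) = deriv a + deriv b
  deriv_mul : ∀ a b, deriv (a * b) = deriv a * b + a * deriv b

attribute [instance] DFld.fieldInst DFld.charZeroInst

/-- The result of applying the monic linear differential operator
`∂^n + a_{n-1} ∂^{n-1} + ⋯ + a_1 ∂ + a_0` (with coefficients `a`) to `y`,
where the derivation is given by `D`. -/
def LApply {E : Type u} [Field E] (D : E → E) (n : ℕ) (a : Fin n → E) (y : E) : E :=
  D^[n] y + ∑ i : Fin n, a i * D^[(i : ℕ)] y

/-- `diffGen D k S` is the smallest differential subfield (w.r.t. the derivation `D`)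
containing the subfield `k` and the set `S`; i.e. the differential field `k⟨S⟩`. -/
def diffGen {E : Type u} [Field E] (D : E → E) (k : Subfield E) (S : Set E) : Subfield E :=
  sInf {F : Subfield E | k ≤ F ∧ S ⊆ ↑F ∧ ∀ x ∈ F, D x ∈ F}

/-- The subfield of constants of a differential subfield `k`: `{x ∈ k | D x = 0}`. -/
def constantsOf {E : Type u} [Field E] (D : Derivation ℤ E E) (k : Subfield E) : Subfield E where
  carrier := {x | x ∈ k ∧ D x = 0}
  zero_mem' := ⟨k.zero_mem, map_zero D⟩
  one_mem' := ⟨k.one_mem, D.map_one_eq_zero⟩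
  add_mem' := by
    rintro a b ⟨hak, ha0⟩ ⟨hbk, hb0⟩
    exact ⟨k.add_mem hak hbk, by rw [map_add, ha0, hb0, add_zero]⟩
  neg_mem' := by
    rintro a ⟨hak, ha0⟩
    exact ⟨k.neg_mem hak, by rw [map_neg, ha0, neg_zero]⟩
  mul_mem' := by
    rintro a b ⟨hak, ha0⟩ ⟨hbk, hb0⟩
    exact ⟨k.mul_mem hak hbk, by
      rw [Derivation.leibniz, ha0, hb0, smul_zero, smul_zero, add_zero]⟩
  inv_mem' := by
    rintro x ⟨hxk, hx0⟩
    refine ⟨k.inv_mem hxk, ?_⟩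
    by_cases h : x = 0
    · simp [h]
    · have h1 : D (x * x⁻¹) = 0 := by rw [mul_inv_cancel₀ h, D.map_one_eq_zero]
      rw [Derivation.leibniz, hx0, smul_zero, add_zero, smul_eq_mul] at h1
      exact (mul_eq_zero.mp h1).resolve_left h

/-- `F` is a Picard–Vessiot extension of `k` (inside a common differential field) for the
monic linear differential operator of order `n` with (lower-order) coefficients `a`:
both are differential subfields, the constants of `F` equal the constants of `k`,
the coefficients lie in `k`, and `F` is differentially generated over `k` by an
`n`-dimensional vector space (over the constants) of solutions. -/
def IsPVWith {E : Type u} [Field E] (D : E → E) (k F : Subfield E) (n : ℕ)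
    (a : Fin n → E) : Prop :=
  k ≤ F ∧ (∀ x ∈ k, D x ∈ k) ∧ (∀ x ∈ F, D x ∈ F) ∧
  (∀ x ∈ F, D x = 0 → x ∈ k) ∧
  (∀ i, a i ∈ k) ∧
  ∃ y : Fin n → E,
    (∀ i, y i ∈ F) ∧
    (∀ i, LApply D n a (y i) = 0) ∧
    (∀ c : Fin n → E, (∀ i, c i ∈ k ∧ D (c i) = 0) → (∑ i, c i * y i) = 0 → ∀ i, c i = 0) ∧
    diffGen D k (Set.range y) = F

/-- `F` is a Picard–Vessiot extension of `k` for some monic linear differential operator. -/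
def IsPV {E : Type u} [Field E] (D : E → E) (k F : Subfield E) : Prop :=
  ∃ (n : ℕ) (a : Fin n → E), IsPVWith D k F n a

/-- Relative version: the differential subfield `F` is a Picard–Vessiot extension
of the differential subfield `kb ≤ F`. -/
def IsPVRel {E : Type u} [Field E] (D : E → E) (kb F : Subfield E)
    (hF : ∀ x ∈ F, D x ∈ F) : Prop :=
  IsPV (fun x : ↥F => (⟨D ↑x, hF ↑x x.2⟩ : ↥F)) (Subfield.comap F.subtype kb) ⊤

/-- The ambient differential field (with derivation `D`) is a strongly normal extension of
its differential subfield `k`: it is finitely generated as a field extension of `k`, has no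
new constants, and every differential embedding over `k` into a differential field extension
`M` lands in the compositum of the image of the base copy with the constants of `M`. -/
def IsSN {E : Type u} [Field E] (D : E → E) (k : Subfield E) : Prop :=
  (∀ x ∈ k, D x ∈ k) ∧
  (∃ s : Finset E, Subfield.closure (↑k ∪ ↑s) = (⊤ : Subfield E)) ∧
  (∀ x : E, D x = 0 → x ∈ k) ∧
  ∀ (M : DFld.{u}) (ι σ : E →+* M.carrier),
    (∀ x, ι (D x) = M.deriv (ι x)) →
    (∀ x, σ (D x) = M.deriv (σ x)) →
    (∀ x ∈ k, σ x = ι x) →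
    ∀ e : E, σ e ∈ Subfield.closure (Set.range ι ∪ {m : M.carrier | M.deriv m = 0})

/-- Relative version: the differential subfield `F` is a strongly normal extension of the
differential subfield `kb ≤ F`. -/
def IsSNRel {E : Type u} [Field E] (D : E → E) (kb F : Subfield E)
    (hF : ∀ x ∈ F, D x ∈ F) : Prop :=
  IsSN (fun x : ↥F => (⟨D ↑x, hF ↑x x.2⟩ : ↥F)) (Subfield.comap F.subtype kb)

/-- `K` is a finite field extension of the subfield `M`. -/
def FinExt {E : Type u} [Field E] (M K : Subfield E) : Prop :=
  ∃ h : M ≤ K,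
    letI : Algebra ↥M ↥K := (Subfield.inclusion h).toAlgebra
    Module.Finite ↥M ↥K

/-- The transcendence degree of the subfield `K` over the subfield `k`, as the supremum of the
cardinalities of subsets of `K` that are algebraically independent over `k`. -/
noncomputable def trdegOf {E : Type u} [Field E] (k K : Subfield E) : Cardinal.{u} :=
  ⨆ s : {s : Set E // s ⊆ (K : Set E) ∧ AlgebraicIndependent ↥k (fun x : ↥s => (x : E))},
    Cardinal.mk ↥(s.1)

/-- `K` and `M` are free over `k`: every finite subset of `K` that is algebraically
independent over `k` remains algebraically independent over `M`. -/
def FreeOver {E : Type u} [Field E] (k K M : Subfield E) : Prop :=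
  ∀ s : Finset E, (↑s : Set E) ⊆ (K : Set E) →
    AlgebraicIndependent ↥k (fun x : ↥(↑s : Set E) => (x : E)) →
    AlgebraicIndependent ↥M (fun x : ↥(↑s : Set E) => (x : E))

/-- `K` is a `k`-irreducible differential field: it is a finitely generated differential field
extension of `k` of transcendence degree at least 1, and every intermediate differential field
`k ⊂ M ⊆ K` has transcendence degree `0` or `trdeg(K|k)` over `k`. -/
def IsIrred {E : Type u} [Field E] (D : E → E) (k K : Subfield E) : Prop :=
  (∃ s : Finset E, diffGen D k ↑s = K) ∧
  1 ≤ trdegOf k K ∧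
  ∀ M : Subfield E, (∀ x ∈ M, D x ∈ M) → k < M → M ≤ K →
    trdegOf k M = 0 ∨ trdegOf k M = trdegOf k K

/-- `Kf` is a `d`-solvable extension of `k`: there is a tower of differential fields starting
at (a copy of) `k`, each step being a finite algebraic extension or a Picard–Vessiot extension
for an operator of order at most `d`, whose top contains (the copy of) `Kf`. -/
def IsDSolvable {E : Type u} [Field E] (D : E → E) (k Kf : Subfield E) (d : ℕ) : Prop :=
  ∃ (Ω : DFld.{u}) (j : E →+* Ω.carrier),
    (∀ x, j (D x) = Ω.deriv (j x)) ∧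
    ∃ (r : ℕ) (T : Fin (r + 1) → Subfield Ω.carrier),
      T 0 = Subfield.map j k ∧
      Subfield.map j Kf ≤ T (Fin.last r) ∧
      (∀ i, ∀ x ∈ T i, Ω.deriv x ∈ T i) ∧
      ∀ i : Fin r,
        FinExt (T i.castSucc) (T i.succ) ∨
        ∃ n ≤ d, ∃ a : Fin n → Ω.carrier, IsPVWith Ω.deriv (T i.castSucc) (T i.succ) n a

/-- `Kn` is generated over `kb`, as a differential field with the same constants, by one
solution `z` of an inhomogeneous equation `L(y) = b` (with `L` monic over `kb` of order
`n ≤ d` and `b ∈ kb`) together with an `n`-dimensional space (over the constants) of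
solutions of `L(y) = 0`. -/
def IsPVInhomLe {E : Type u} [Field E] (D : E → E) (kb Kn : Subfield E) (d : ℕ) : Prop :=
  kb ≤ Kn ∧ (∀ x ∈ kb, D x ∈ kb) ∧ (∀ x ∈ Kn, D x ∈ Kn) ∧
  (∀ x ∈ Kn, D x = 0 → x ∈ kb) ∧
  ∃ n, n ≤ d ∧ ∃ (a : Fin n → E) (b z : E) (y : Fin n → E),
    (∀ i, a i ∈ kb) ∧ b ∈ kb ∧ z ∈ Kn ∧ (∀ i, y i ∈ Kn) ∧
    LApply D n a z = b ∧
    (∀ i, LApply D n a (y i) = 0) ∧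
    (∀ c : Fin n → E, (∀ i, c i ∈ kb ∧ D (c i) = 0) → (∑ i, c i * y i) = 0 → ∀ i, c i = 0) ∧
    diffGen D kb (insert z (Set.range y)) = Kn

/-- `Kf` is a `d⁺`-solvable extension of `k`. -/
def IsDPlusSolvable {E : Type u} [Field E] (D : E → E) (k Kf : Subfield E) (d : ℕ) : Prop :=
  ∃ (Ω : DFld.{u}) (j : E →+* Ω.carrier),
    (∀ x, j (D x) = Ω.deriv (j x)) ∧
    ∃ (r : ℕ) (T : Fin (r + 1) → Subfield Ω.carrier),
      T 0 = Subfield.map j k ∧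
      Subfield.map j Kf ≤ T (Fin.last r) ∧
      (∀ i, ∀ x ∈ T i, Ω.deriv x ∈ T i) ∧
      ∀ i : Fin r,
        FinExt (T i.castSucc) (T i.succ) ∨ IsPVInhomLe Ω.deriv (T i.castSucc) (T i.succ) d

/-- `TSet D kb K` is the set of elements of `K` annihilated by some monic linear differential
operator with coefficients in `kb`. -/
def TSet {E : Type u} [Field E] (D : E → E) (kb K : Subfield E) : Set E :=
  {x | x ∈ K ∧ ∃ (n : ℕ) (a : Fin n → E), (∀ i, a i ∈ kb) ∧ LApply D n a x = 0}

/-!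
Every `f ∈ K` is a quotient `P / Q` of `k`-linear combinations of the entries of a solution `x` of a
linear system `x' = A x` over `k` having a fundamental matrix over `E`. Picking from the entries of
`x` a `K`-basis `z` of their span and writing `x = b z` with `b` over `K`, one finds `z' = B z` with
`B` over `K` and a fundamental matrix `Z` of this smaller system for which `(b Z)' = A (b Z)`. Hence
the entries of `b Z`, and of `Z` (which is a row-submatrix of it), are D-finite over `k`, and so are
`w = det Z` and all products `w b i j`, by Cramer's rule; moreover `w' / w = tr B ∈ K`. This is
Chevalley's construction of a character, with determinants in place of the Galois group.

Take `f` transcendental over `k`. If `w' / w` is transcendental, put `y = w`. Otherwise `w⁻¹` is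
D-finite, so all `b i j ∈ K` are D-finite; comparing coefficients in `f Q = P` shows that some entry
`g` of `b` is transcendental, and then one of `g' / g` and `g' / (g + 1)` is, because `g` is a
rational function of the two. So `y = g` or `y = g + 1` will do. Now `k⟨y' / y⟩` has positive
transcendence degree, so by irreducibility `K` is algebraic over it, and finite because it is
differentially finitely generated.
-/

universe v

open IntermediateField Matrix

section DerivationMatrix

variable {R A : Type*} [CommRing R] [CommRing A] [Algebra R A] (D : Derivation R A A)

theorem derivation_prod {ι : Type*} [DecidableEq ι] (s : Finset ι) (f : ι → A) :
    D (∏ i ∈ s, f i) = ∑ i ∈ s, ∏ j ∈ s, Function.update f i (D (f i)) j := by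
  induction s using Finset.induction_on with
  | empty => simp
  | insert a s ha ih =>
    have hcongr : ∀ i ∈ s, ∏ j ∈ insert a s, Function.update f i (D (f i)) j =
        f a * ∏ j ∈ s, Function.update f i (D (f i)) j := fun i hi => by
      rw [Finset.prod_insert ha, Function.update_of_ne (ne_of_mem_of_not_mem hi ha).symm]
    rw [Finset.prod_insert ha, D.leibniz, ih, Finset.sum_insert ha, Finset.sum_congr rfl hcongr,
      Finset.prod_insert ha, Function.update_self, Finset.prod_update_of_notMem ha,
      ← Finset.mul_sum, smul_eq_mul, smul_eq_mul, add_comm, mul_comm (D (f a))]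

variable {l m n : Type*}

theorem derivation_det [Fintype n] [DecidableEq n] (M : Matrix n n A) :
    D M.det = ∑ j, (M.updateCol j fun i => D (M i j)).det := by
  simp only [det_apply, map_sum, Units.smul_def, map_zsmul, derivation_prod]
  rw [Finset.sum_comm]
  refine Finset.sum_congr rfl fun σ _ => ?_
  rw [Finset.smul_sum]
  refine Finset.sum_congr rfl fun j _ => congrArg _ (Finset.prod_congr rfl fun i _ => ?_)
  rcases eq_or_ne i j with rfl | hij
  · simp
  · simp [hij]

theorem derivation_det_of_map_eq_mul [Fintype n] [DecidableEq n] {B W : Matrix n n A}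
    (hW : W.map D = B * W) : D W.det = B.trace * W.det := by
  rw [← det_transpose W, derivation_det, trace, Finset.sum_mul]
  refine Finset.sum_congr rfl fun i _ => ?_
  have hcol : (fun j => D (Wᵀ j i)) = fun j => ∑ l, B i l • Wᵀ j l := by
    ext j
    simpa only [map_apply, mul_apply, transpose_apply, smul_eq_mul] using congrFun₂ hW i j
  rw [hcol, det_updateCol_sum, diag_apply, smul_eq_mul]

theorem map_derivation_mul [Fintype m] (M : Matrix l m A) (N : Matrix m n A) :
    (M * N).map D = M.map D * N + M * N.map D := by
  ext i j
  simp only [map_apply, mul_apply, Matrix.add_apply, map_sum, D.leibniz, smul_eq_mul,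
    ← Finset.sum_add_distrib]
  exact Finset.sum_congr rfl fun _ _ => by ring

theorem derivation_comp_mulVec [Fintype n] (M : Matrix m n A) (v : n → A) :
    D ∘ (M *ᵥ v) = M.map D *ᵥ v + M *ᵥ (D ∘ v) := by
  ext i
  simp only [Function.comp_apply, mulVec, dotProduct, Pi.add_apply, map_apply, map_sum, D.leibniz,
    smul_eq_mul, ← Finset.sum_add_distrib]
  exact Finset.sum_congr rfl fun _ _ => by ring

theorem map_derivation_one [DecidableEq n] : (1 : Matrix n n A).map D = 0 := by
  ext i j
  rw [map_apply, one_apply]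
  split_ifs <;> simp

theorem map_derivation_inv [Fintype n] [DecidableEq n] {G : Matrix n n A} (hG : IsUnit G) :
    G⁻¹.map D = -(G⁻¹ * G.map D * G⁻¹) := by
  have hdet := (isUnit_iff_isUnit_det G).1 hG
  have h : G⁻¹ * (G * G⁻¹).map D = 0 := by
    rw [mul_nonsing_inv G hdet, map_derivation_one, Matrix.mul_zero]
  rw [map_derivation_mul, Matrix.mul_add, nonsing_inv_mul_cancel_left G _ hdet, add_comm,
    ← Matrix.mul_assoc] at h
  exact eq_neg_of_add_eq_zero_left h

end DerivationMatrix

theorem exists_ne_zero_forall_derivation_eq_zero {R F ι : Type*} [CommRing R] [Field F]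
    [Algebra R F] [Finite ι] (D : Derivation R F F) {N : Submodule F (ι → F)}
    (hN : ∀ v ∈ N, D ∘ v ∈ N) (hN0 : N ≠ ⊥) : ∃ v ∈ N, v ≠ 0 ∧ D ∘ v = 0 := by
  obtain ⟨v, ⟨hvN, hv0⟩, hmin⟩ := exists_minimalFor_of_wellFoundedLT
    (fun v => v ∈ N ∧ v ≠ 0) Function.support (N.ne_bot_iff.1 hN0)
  obtain ⟨i, hi⟩ := Function.ne_iff.1 hv0
  -- After normalising one entry to be `1`, differentiation strictly shrinks the support.
  set w := (v i)⁻¹ • v with hw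
  have hwi : w i = 1 := inv_mul_cancel₀ hi
  have hwN : w ∈ N := N.smul_mem _ hvN
  refine ⟨w, hwN, fun h => one_ne_zero (hwi.symm.trans (congrFun h i)), ?_⟩
  by_contra hDw
  have hsub : Function.support (D ∘ w) ⊆ Function.support v := fun j hj hvj => by
    refine hj ?_
    rw [Function.comp_apply, hw, Pi.smul_apply, hvj, smul_zero, map_zero]
  have hmem : i ∈ Function.support (D ∘ w) := hmin ⟨hN w hwN, hDw⟩ hsub hi
  exact hmem (by rw [Function.comp_apply, hwi, D.map_one_eq_zero])

theorem isUnit_of_map_derivation_eq_mul {R F n : Type*} [CommRing R] [Field F] [Algebra R F]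
    [Fintype n] [DecidableEq n] (D : Derivation R F F) {A W : Matrix n n F}
    (hW : W.map D = A * W) (hconst : ∀ v, D ∘ v = 0 → W *ᵥ v = 0 → v = 0) : IsUnit W := by
  rw [← mulVec_injective_iff_isUnit]
  by_contra hinj
  have hker : LinearMap.ker W.mulVecLin ≠ ⊥ := fun h => hinj (LinearMap.ker_eq_bot.1 h)
  have hstable : ∀ v ∈ LinearMap.ker W.mulVecLin, D ∘ v ∈ LinearMap.ker W.mulVecLin := by
    intro v hv
    rw [LinearMap.mem_ker, mulVecLin_apply] at hv ⊢
    have h := derivation_comp_mulVec D W v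
    rw [hW, ← mulVec_mulVec, hv, mulVec_zero, zero_add] at h
    rw [← h]
    exact funext fun _ => map_zero D
  obtain ⟨v, hv, hv0, hDv⟩ := exists_ne_zero_forall_derivation_eq_zero D hstable hker
  exact hv0 (hconst v hDv hv)

theorem exists_isUnit_submatrix_of_mul_eq_one {F m n : Type*} [Field F] [Fintype m] [Fintype n]
    [DecidableEq n] {M : Matrix m n F} {N : Matrix n m F} (h : N * M = 1) :
    ∃ s : n → m, IsUnit (M.submatrix s id) := by
  obtain ⟨κ, a, -, hspan, hli⟩ := exists_linearIndependent' F M.row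
  have htop : Submodule.span F (Set.range M.row) = ⊤ := by
    rw [← range_vecMulLinear, LinearMap.range_eq_top]
    exact vecMul_surjective_iff_exists_left_inverse.2 ⟨N, h⟩
  let rowBasis : Module.Basis κ F (n → F) := .mk hli (hspan.trans htop).ge
  let e : n ≃ κ := (Pi.basisFun F n).indexEquiv rowBasis
  exact ⟨a ∘ e, linearIndependent_rows_iff_isUnit.1 (hli.comp e e.injective)⟩

section SubalgebraMatrix

variable {R A n : Type*} [CommRing R] [CommRing A] [Algebra R A] [Fintype n] [DecidableEq n]
  {S : Subalgebra R A} {M : Matrix n n A}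

theorem det_mem_of_forall_mem (hM : ∀ i j, M i j ∈ S) : M.det ∈ S := by
  have h : (Matrix.of fun i j => (⟨M i j, hM i j⟩ : S)).det.val = M.det := S.val.map_det _
  exact h ▸ Subtype.prop _

theorem adjugate_mem_of_forall_mem (hM : ∀ i j, M i j ∈ S) (i j : n) : M.adjugate i j ∈ S := by
  have h : (adjugate (Matrix.of fun i j => (⟨M i j, hM i j⟩ : S)) i j).val = M.adjugate i j :=
    congrFun₂ (S.val.map_adjugate _) i j
  exact h ▸ Subtype.prop _

end SubalgebraMatrix

section DifferentialSubfield

variable {E : Type*} [Field E] {D : Derivation ℤ E E} {k M : Subfield E} {s : Set E} {x : E}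

theorem derivation_mem_span (hk : ∀ x ∈ k, D x ∈ k) (hs : ∀ x ∈ s, D x ∈ Submodule.span k s)
    (hx : x ∈ Submodule.span k s) : D x ∈ Submodule.span k s := by
  induction hx using Submodule.span_induction with
  | mem x hx => exact hs x hx
  | zero => simp
  | add x y _ _ hDx hDy => rw [map_add]; exact add_mem hDx hDy
  | smul a x hx hDx =>
    rw [Subfield.smul_def, smul_eq_mul, D.leibniz, smul_eq_mul, smul_eq_mul, mul_comm x]
    exact add_mem (Submodule.smul_mem _ a hDx) (Submodule.smul_mem _ (⟨_, hk a a.2⟩ : k) hx)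

theorem derivation_mem_closure (hs : ∀ x ∈ s, D x ∈ Subfield.closure s)
    (hx : x ∈ Subfield.closure s) : D x ∈ Subfield.closure s := by
  induction hx using Subfield.closure_induction with
  | mem x hx => exact hs x hx
  | one => rw [D.map_one_eq_zero]; exact zero_mem _
  | add x y _ _ hDx hDy => rw [map_add]; exact add_mem hDx hDy
  | neg x _ hDx => rw [map_neg]; exact neg_mem hDx
  | inv x hx hDx =>
    rw [D.leibniz_inv]
    exact mul_mem (neg_mem (pow_mem (inv_mem hx) 2)) hDx
  | mul x y hx hy hDx hDy =>
    rw [D.leibniz]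
    exact add_mem (mul_mem hx hDy) (mul_mem hy hDx)

theorem derivation_mem_adjoin (hM : ∀ x ∈ M, D x ∈ M) (hs : ∀ x ∈ s, D x ∈ adjoin M s)
    (hx : x ∈ adjoin M s) : D x ∈ adjoin M s := by
  refine derivation_mem_closure ?_ hx
  rintro _ (⟨a, rfl⟩ | hx)
  · exact (adjoin M s).algebraMap_mem ⟨D a, hM a a.2⟩
  · exact hs _ hx

theorem derivation_mem_of_isAlgebraic [CharZero E] (hM : ∀ x ∈ M, D x ∈ M)
    {F : IntermediateField M E} (hx : x ∈ F) (halg : IsAlgebraic M x) : D x ∈ F := by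
  have haeval (p : Polynomial M) :
      D (p.aeval x) - p.derivative.aeval x * D x ∈ F := by
    induction p using Polynomial.induction_on' with
    | add p q hp hq =>
      convert add_mem hp hq using 1
      simp only [map_add]
      ring
    | monomial n a =>
      have hDa : D (algebraMap M E a) * x ^ n ∈ F :=
        mul_mem (F.algebraMap_mem ⟨D a, hM a a.2⟩) (pow_mem hx n)
      convert hDa using 1
      simp only [Polynomial.aeval_monomial, Polynomial.derivative_monomial, D.leibniz,
        D.leibniz_pow, smul_eq_mul, nsmul_eq_mul, map_mul, map_natCast]
      ring
  have hirr := minpoly.irreducible halg.isIntegral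
  have hne : (minpoly M x).derivative.aeval x ≠ 0 :=
    hirr.separable.aeval_derivative_ne_zero (minpoly.aeval M x)
  have hmem : (minpoly M x).derivative.aeval x * D x ∈ F := by
    simpa only [minpoly.aeval, map_zero, zero_sub, neg_mem_iff] using haeval (minpoly M x)
  have hmem' : (minpoly M x).derivative.aeval x ∈ F :=
    F.val_mk hx ▸ Polynomial.aeval_algHom_apply F.val ⟨x, hx⟩ _ ▸ Subtype.prop _
  simpa only [inv_mul_cancel_left₀ hne] using mul_mem (inv_mem hmem') hmem

end DifferentialSubfield

section DiffGen

variable {E : Type u} [Field E] {k M F : Subfield E} {s : Set E}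

theorem diffGen_le {D : E → E} (hk : k ≤ F) (hs : s ⊆ F) (hF : ∀ x ∈ F, D x ∈ F) :
    diffGen D k s ≤ F :=
  sInf_le ⟨hk, hs, hF⟩

theorem le_diffGen (D : E → E) (k : Subfield E) (s : Set E) : k ≤ diffGen D k s :=
  le_sInf fun _ h => h.1

theorem subset_diffGen (D : E → E) (k : Subfield E) (s : Set E) : s ⊆ diffGen D k s :=
  fun _ hx => Subfield.mem_sInf.2 fun _ h => h.2.1 hx

theorem apply_mem_diffGen {D : E → E} {x : E} (hx : x ∈ diffGen D k s) :
    D x ∈ diffGen D k s :=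
  Subfield.mem_sInf.2 fun F h => h.2.2 x (Subfield.mem_sInf.1 hx F h)

theorem diffGen_le_adjoin {D : Derivation ℤ E E} {t : Set E} (hkM : k ≤ M)
    (hM : ∀ x ∈ M, D x ∈ M) (hst : s ⊆ adjoin M t) (ht : ∀ x ∈ t, D x ∈ adjoin M t) :
    diffGen D k s ≤ (adjoin M t).toSubfield :=
  diffGen_le (fun x hx => (adjoin M t).algebraMap_mem ⟨x, hkM hx⟩) hst
    fun _ hx => derivation_mem_adjoin hM ht hx

end DiffGen

section DFinite

variable {E : Type u} [Field E] {D : Derivation ℤ E E} {k : Subfield E}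

/-- The ring of elements of `E` that are D-finite over the differential subfield `k`, i.e. those
annihilated by some monic linear differential operator over `k`. We encode this as membership in a
finitely generated `k`-submodule that is stable under the derivation. -/
def dFinite (D : Derivation ℤ E E) (k : Subfield E) (hk : ∀ x ∈ k, D x ∈ k) : Subalgebra k E where
  carrier := {y | ∃ S : Submodule k E, S.FG ∧ (∀ x ∈ S, D x ∈ S) ∧ y ∈ S}
  add_mem' := by
    rintro x y ⟨S, hS, hDS, hx⟩ ⟨T, hT, hDT, hy⟩
    refine ⟨S ⊔ T, hS.sup hT, fun z hz => ?_, Submodule.add_mem_sup hx hy⟩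
    obtain ⟨a, ha, b, hb, rfl⟩ := Submodule.mem_sup.1 hz
    rw [map_add]
    exact Submodule.add_mem_sup (hDS a ha) (hDT b hb)
  mul_mem' := by
    rintro x y ⟨S, hS, hDS, hx⟩ ⟨T, hT, hDT, hy⟩
    refine ⟨S * T, hS.mul hT, fun z hz => ?_, Submodule.mul_mem_mul hx hy⟩
    induction hz using Submodule.mul_induction_on' with
    | mem_mul_mem a ha b hb =>
      rw [D.leibniz, smul_eq_mul, smul_eq_mul, mul_comm b]
      exact add_mem (Submodule.mul_mem_mul ha (hDT b hb)) (Submodule.mul_mem_mul (hDS a ha) hb)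
    | add a _ b _ hDa hDb => rw [map_add]; exact add_mem hDa hDb
  algebraMap_mem' c := by
    refine ⟨1, ⟨{1}, by simp [Submodule.one_eq_span]⟩, fun x hx => ?_, Submodule.algebraMap_mem c⟩
    obtain ⟨a, rfl⟩ := Submodule.mem_one.1 hx
    exact Submodule.algebraMap_mem (⟨D a, hk a a.2⟩ : k)

variable {hk : ∀ x ∈ k, D x ∈ k}

theorem exists_LApply_eq_zero_of_mem_dFinite {y : E} (hy : y ∈ dFinite D k hk) :
    ∃ (n : ℕ) (a : Fin n → E), (∀ i, a i ∈ k) ∧ LApply D n a y = 0 := by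
  obtain ⟨S, hS, hDS, hyS⟩ := hy
  have hmem (i : ℕ) : D^[i] y ∈ S := Set.MapsTo.iterate hDS i hyS
  have : Module.Finite k S := .of_fg hS
  -- By noetherianity the derivatives of `y` satisfy a linear relation with leading coefficient 1.
  let f : ℕ →o Submodule k S :=
    ⟨fun n => .span k (Set.range fun i : Fin n => (⟨D^[i] y, hmem i⟩ : S)), fun n m hnm =>
      Submodule.span_mono (Set.range_subset_iff.2 fun i => ⟨i.castLE hnm, rfl⟩)⟩
  obtain ⟨n, hn⟩ := monotone_stabilizes_iff_noetherian.2 (inferInstance : IsNoetherian k S) f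
  have hspan : (⟨D^[n] y, hmem n⟩ : S) ∈ f n := by
    rw [hn (n + 1) n.le_succ]
    exact Submodule.subset_span ⟨Fin.last n, rfl⟩
  obtain ⟨c, hc⟩ := (Submodule.mem_span_range_iff_exists_fun k).1 hspan
  have hrel : ∑ i, (c i : E) * D^[i] y = D^[n] y := by
    simpa [Subfield.smul_def] using congrArg Subtype.val hc
  refine ⟨n, fun i => -(c i : E), fun i => neg_mem (c i).2, ?_⟩
  simp only [LApply, ← hrel, neg_mul, Finset.sum_neg_distrib, add_neg_cancel]

theorem mem_dFinite_of_map_derivation_eq_mul {ι κ : Type*} [Fintype ι] {A : Matrix ι ι E}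
    {X : Matrix ι κ E} (hA : ∀ i j, A i j ∈ k) (hX : X.map D = A * X) (i : ι) (j : κ) :
    X i j ∈ dFinite D k hk := by
  have hcol (i : ι) : X i j ∈ Submodule.span k (Set.range fun i => X i j) :=
    Submodule.subset_span ⟨i, rfl⟩
  refine ⟨.span k (Set.range fun i => X i j), Submodule.fg_span (Set.finite_range _),
    fun x hx => derivation_mem_span hk (Set.forall_mem_range.2 fun i => ?_) hx, hcol i⟩
  have hDX : D (X i j) = ∑ l, A i l * X l j := by
    simpa only [map_apply, mul_apply] using congrFun₂ hX i j
  exact hDX ▸ sum_mem fun l _ => Submodule.smul_mem _ (⟨A i l, hA i l⟩ : k) (hcol l)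

theorem inv_mem_dFinite_of_isAlgebraic [CharZero E] {w : E}
    (halg : IsAlgebraic k (D w / w)) : w⁻¹ ∈ dFinite D k hk := by
  let F := k⟮D w / w⟯
  have : FiniteDimensional k F := adjoin.finiteDimensional halg.isIntegral
  have hDF (x : E) (hx : x ∈ F) : D x ∈ F := derivation_mem_of_isAlgebraic hk hx
    ((Algebra.IsAlgebraic.isAlgebraic (⟨x, hx⟩ : F)).algebraMap (A := E))
  refine ⟨F.toSubalgebra.toSubmodule.map (LinearMap.mulRight k w⁻¹),
    (Module.Finite.iff_fg.1 this).map _, ?_, 1, one_mem F, one_mul _⟩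
  rintro _ ⟨a, ha, rfl⟩
  have hmem : D a - D w / w * a ∈ F :=
    sub_mem (hDF a ha) (mul_mem (mem_adjoin_simple_self k _) ha)
  refine ⟨_, hmem, ?_⟩
  simp only [LinearMap.mulRight_apply, D.leibniz, D.leibniz_inv, smul_eq_mul]
  ring

end DFinite

section Kronecker

open scoped Kronecker

variable {R A : Type*} [CommRing R] [CommRing A] [Algebra R A] {l m n p : Type*}

theorem map_derivation_kronecker (D : Derivation R A A) (M : Matrix l m A) (N : Matrix n p A) :
    (M ⊗ₖ N).map D = M.map D ⊗ₖ N + M ⊗ₖ N.map D := by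
  ext i j
  simp only [map_apply, kroneckerMap_apply, Matrix.add_apply, D.leibniz, smul_eq_mul]
  ring

theorem kronecker_mulVec_mul [Fintype m] [Fintype p] (M : Matrix l m A) (N : Matrix n p A)
    (x : m → A) (y : p → A) :
    (M ⊗ₖ N) *ᵥ (fun j => x j.1 * y j.2) = fun i => (M *ᵥ x) i.1 * (N *ᵥ y) i.2 := by
  ext i
  simp only [mulVec, dotProduct, kroneckerMap_apply, Fintype.sum_prod_type, Finset.sum_mul_sum]
  exact Finset.sum_congr rfl fun _ _ => Finset.sum_congr rfl fun _ _ => mul_mul_mul_comm _ _ _ _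

end Kronecker

section SplitSystem

variable {E : Type u} [Field E] {D : Derivation ℤ E E} {k : Subfield E}
  {ι κ : Type*} [Fintype ι] [DecidableEq ι] [Fintype κ] [DecidableEq κ]

/-- The vector `x` solves a first-order linear system `x' = A x` over `k` that splits in `E`, i.e.
has an invertible matrix of solutions `Y` (a fundamental matrix) with entries in `E`. -/
def IsSplit (D : Derivation ℤ E E) (k : Subfield E) (x : ι → E) : Prop :=
  ∃ A Y : Matrix ι ι E, (∀ i j, A i j ∈ k) ∧ IsUnit Y ∧ Y.map D = A * Y ∧ D ∘ x = A *ᵥ x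

theorem isSplit_one : IsSplit D k (1 : Unit → E) :=
  ⟨0, 1, fun _ _ => k.zero_mem, isUnit_one, by rw [map_derivation_one, Matrix.zero_mul],
    by rw [zero_mulVec]; exact funext fun _ => D.map_one_eq_zero⟩

theorem IsSplit.sumElim {x : ι → E} {y : κ → E} (hx : IsSplit D k x) (hy : IsSplit D k y) :
    IsSplit D k (Sum.elim x y) := by
  obtain ⟨A, Y, hA, hY, hDY, hDx⟩ := hx
  obtain ⟨B, Z, hB, hZ, hDZ, hDy⟩ := hy
  refine ⟨fromBlocks A 0 0 B, fromBlocks Y 0 0 Z, ?_, isUnit_fromBlocks_zero₂₁.2 ⟨hY, hZ⟩, ?_, ?_⟩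
  · rintro (i | i) (j | j)
    exacts [hA i j, k.zero_mem, k.zero_mem, hB i j]
  · simp [fromBlocks_map, fromBlocks_multiply, hDY, hDZ]
  · simp [Sum.comp_elim, fromBlocks_mulVec, hDx, hDy]

open scoped Kronecker in
theorem IsSplit.kronecker {x : ι → E} {y : κ → E} (hx : IsSplit D k x) (hy : IsSplit D k y) :
    IsSplit D k (fun i : ι × κ => x i.1 * y i.2) := by
  obtain ⟨A, Y, hA, hY, hDY, hDx⟩ := hx
  obtain ⟨B, Z, hB, hZ, hDZ, hDy⟩ := hy
  have honeι := one_mem (k.toSubring.matrix (n := ι))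
  have honeκ := one_mem (k.toSubring.matrix (n := κ))
  refine ⟨A ⊗ₖ 1 + 1 ⊗ₖ B, Y ⊗ₖ Z,
    fun _ _ => k.add_mem (mul_mem (hA _ _) (honeκ _ _)) (mul_mem (honeι _ _) (hB _ _)),
    hY.kronecker hZ, ?_, ?_⟩
  · rw [map_derivation_kronecker, hDY, hDZ, Matrix.add_mul, ← mul_kronecker_mul,
      ← mul_kronecker_mul, Matrix.one_mul, Matrix.one_mul]
  · rw [add_mulVec, kronecker_mulVec_mul, kronecker_mulVec_mul, one_mulVec, one_mulVec, ← hDx,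
      ← hDy]
    ext i
    simp only [Function.comp_apply, Pi.add_apply, D.leibniz, smul_eq_mul]
    ring

/-- The ring of `k`-linear combinations of entries of solutions of linear systems over `k` that
split in `E`; if `E` is a Picard–Vessiot extension, this is its Picard–Vessiot ring. -/
def splitRing (D : Derivation ℤ E E) (k : Subfield E) : Subalgebra k E where
  carrier := {P | ∃ (ι : Type) (_ : Fintype ι) (_ : DecidableEq ι) (x : ι → E),
    IsSplit D k x ∧ P ∈ Submodule.span k (Set.range x)}
  add_mem' := by
    rintro P Q ⟨ι, _, _, x, hx, hP⟩ ⟨κ, _, _, y, hy, hQ⟩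
    refine ⟨ι ⊕ κ, _, _, _, hx.sumElim hy, ?_⟩
    rw [Set.Sum.elim_range, Submodule.span_union]
    exact Submodule.add_mem_sup hP hQ
  mul_mem' := by
    rintro P Q ⟨ι, _, _, x, hx, hP⟩ ⟨κ, _, _, y, hy, hQ⟩
    refine ⟨ι × κ, _, _, _, hx.kronecker hy, ?_⟩
    have hPQ := Submodule.mul_mem_mul hP hQ
    rw [Submodule.span_mul_span] at hPQ
    refine Submodule.span_mono ?_ hPQ
    rintro _ ⟨_, ⟨i, rfl⟩, _, ⟨j, rfl⟩, rfl⟩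
    exact ⟨(i, j), rfl⟩
  algebraMap_mem' c := by
    refine ⟨Unit, _, _, 1, isSplit_one, ?_⟩
    rw [Algebra.algebraMap_eq_smul_one]
    exact Submodule.smul_mem _ c (Submodule.subset_span ⟨(), rfl⟩)

theorem exists_isSplit_of_mem_splitRing {P Q : E} (hP : P ∈ splitRing D k)
    (hQ : Q ∈ splitRing D k) :
    ∃ (ι : Type) (_ : Fintype ι) (_ : DecidableEq ι) (x : ι → E), IsSplit D k x ∧
      P ∈ Submodule.span k (Set.range x) ∧ Q ∈ Submodule.span k (Set.range x) := by
  obtain ⟨ι, _, _, x, hx, hP⟩ := hP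
  obtain ⟨κ, _, _, y, hy, hQ⟩ := hQ
  refine ⟨ι ⊕ κ, inferInstance, inferInstance, _, hx.sumElim hy, ?_⟩
  rw [Set.Sum.elim_range]
  exact ⟨Submodule.span_mono Set.subset_union_left hP,
    Submodule.span_mono Set.subset_union_right hQ⟩

end SplitSystem

section PicardVessiot

variable {E : Type u} [Field E] {D : Derivation ℤ E E} {k : Subfield E} {n : ℕ}

/-- The companion matrix of the operator `LApply D n a`, i.e. the matrix of the first-order
system satisfied by `(y, y', …, y⁽ⁿ⁻¹⁾)` for the solutions `y`. -/
def companionMatrix (a : Fin n → E) : Matrix (Fin n) (Fin n) E :=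
  .of fun i j => if (i : ℕ) + 1 = n then -a j else if (j : ℕ) = i + 1 then 1 else 0

/-- The Wronskian matrix of a family, with columns `(y j, (y j)', …, (y j)⁽ⁿ⁻¹⁾)`. -/
def wronskianMatrix (D : E → E) (y : Fin n → E) : Matrix (Fin n) (Fin n) E :=
  .of fun i j => D^[i] (y j)

theorem companionMatrix_mem {a : Fin n → E} (ha : ∀ i, a i ∈ k) (i j : Fin n) :
    companionMatrix a i j ∈ k := by
  simp only [companionMatrix, of_apply]
  split_ifs
  exacts [neg_mem (ha j), k.one_mem, k.zero_mem]

theorem map_wronskianMatrix {D : E → E} {a y : Fin n → E} (hy : ∀ j, LApply D n a (y j) = 0) :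
    (wronskianMatrix D y).map D = companionMatrix a * wronskianMatrix D y := by
  ext i j
  simp only [map_apply, mul_apply, wronskianMatrix, companionMatrix, of_apply]
  rw [← Function.iterate_succ_apply' D]
  by_cases hi : (i : ℕ) + 1 = n
  · have hrel := eq_neg_of_add_eq_zero_left (hy j)
    simpa only [hi, if_true, Nat.succ_eq_add_one, neg_mul, Finset.sum_neg_distrib] using hrel
  · have hlt : (i : ℕ) + 1 < n := by lia
    rw [Finset.sum_eq_single (⟨i + 1, hlt⟩ : Fin n)]
    · simp [hi]
    · intro l _ hl
      rw [if_neg hi, if_neg fun h => hl (Fin.ext h), zero_mul]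
    · simp

theorem isUnit_wronskianMatrix {a y : Fin n → E} (hy : ∀ j, LApply D n a (y j) = 0)
    (hind : ∀ c : Fin n → E, (∀ i, D (c i) = 0) → ∑ i, c i * y i = 0 → ∀ i, c i = 0) :
    IsUnit (wronskianMatrix D y) := by
  refine isUnit_of_map_derivation_eq_mul D (map_wronskianMatrix hy) fun v hDv hWv => funext fun i =>
    hind v (congrFun hDv) ?_ i
  simpa [wronskianMatrix, mulVec, dotProduct, mul_comm] using congrFun hWv ⟨0, i.pos⟩

theorem exists_fundamentalMatrix_of_isPV (hPV : IsPV D k ⊤) :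
    ∃ (n : ℕ) (A Y : Matrix (Fin n) (Fin n) E), (∀ i j, A i j ∈ k) ∧ IsUnit Y ∧
      Y.map D = A * Y ∧ adjoin k (Set.range fun p : Fin n × Fin n => Y p.1 p.2) = ⊤ := by
  obtain ⟨n, a, -, hk, -, hconst, ha, y, -, hy, hind, hgen⟩ := hPV
  set W := wronskianMatrix D y
  set F := adjoin k (Set.range fun p : Fin n × Fin n => W p.1 p.2)
  have hWD : W.map D = companionMatrix a * W := map_wronskianMatrix hy
  have hWmem (i j : Fin n) : W i j ∈ F := subset_adjoin _ _ ⟨(i, j), rfl⟩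
  have hDW (i j : Fin n) : D (W i j) ∈ F := by
    have hentry : D (W i j) = ∑ l, companionMatrix a i l * W l j := congrFun₂ hWD i j
    exact hentry ▸ sum_mem fun l _ =>
      mul_mem (F.algebraMap_mem ⟨_, companionMatrix_mem ha i l⟩) (hWmem l j)
  have hle : diffGen D k (Set.range y) ≤ F.toSubfield :=
    diffGen_le_adjoin le_rfl hk (Set.range_subset_iff.2 fun j => hWmem ⟨0, j.pos⟩ j)
      (Set.forall_mem_range.2 fun p => hDW p.1 p.2)
  refine ⟨n, companionMatrix a, W, companionMatrix_mem ha, isUnit_wronskianMatrix hy ?_, hWD, ?_⟩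
  · exact fun c hc => hind c fun i => ⟨hconst _ trivial (hc i), hc i⟩
  · exact eq_top_iff.2 fun x _ => hle (hgen ▸ Subfield.mem_top x)

theorem essFiniteType_of_isPV (hPV : IsPV D k ⊤) : Algebra.EssFiniteType k E := by
  obtain ⟨n, A, Y, -, -, -, htop⟩ := exists_fundamentalMatrix_of_isPV hPV
  exact fg_top_iff.1 (htop ▸ fg_adjoin_of_finite (Set.finite_range _))

theorem exists_eq_div_of_fundamentalMatrix {A Y : Matrix (Fin n) (Fin n) E}
    (hA : ∀ i j, A i j ∈ k) (hY : IsUnit Y) (hDY : Y.map D = A * Y)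
    (htop : adjoin k (Set.range fun p : Fin n × Fin n => Y p.1 p.2) = ⊤) (f : E) :
    ∃ P ∈ splitRing D k, ∃ Q ∈ splitRing D k, f = P / Q := by
  have hle : Algebra.adjoin k (Set.range fun p : Fin n × Fin n => Y p.1 p.2) ≤ splitRing D k := by
    rw [Algebra.adjoin_le_iff]
    rintro _ ⟨⟨i, j⟩, rfl⟩
    exact ⟨Fin n, inferInstance, inferInstance, fun i => Y i j,
      ⟨A, Y, hA, hY, hDY, funext fun i => congrFun₂ hDY i j⟩, Submodule.subset_span ⟨i, rfl⟩⟩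
  obtain ⟨P, hP, Q, hQ, hf⟩ := mem_adjoin_iff_div.1 (htop ▸ mem_top : f ∈ adjoin k _)
  exact ⟨P, hle hP, Q, hle hQ, hf⟩

end PicardVessiot

section GaugeReduction

variable {E : Type u} [Field E] {D : Derivation ℤ E E} {k K : Subfield E} {ι : Type v} {κ : Type*}

theorem eq_of_mulVec_eq_of_linearIndependent [Fintype κ] {z : κ → E} (hz : LinearIndependent K z)
    {M N : Matrix ι κ E} (hM : ∀ i j, M i j ∈ K) (hN : ∀ i j, N i j ∈ K) (h : M *ᵥ z = N *ᵥ z) :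
    M = N := by
  ext i j
  have hcoeff := hz.eq_coords_of_eq (f := fun j => ⟨M i j, hM i j⟩) (g := fun j => ⟨N i j, hN i j⟩)
    (congrFun h i) j
  exact congrArg Subtype.val hcoeff

variable [Fintype ι]

theorem exists_gauge_reduction (hK : ∀ x ∈ K, D x ∈ K) {A : Matrix ι ι E} {x : ι → E}
    (hA : ∀ i j, A i j ∈ K) (hx : D ∘ x = A *ᵥ x) :
    ∃ (κ : Type v) (_ : Fintype κ) (_ : DecidableEq κ) (a : κ → ι) (b : Matrix ι κ E)
      (B : Matrix κ κ E), (∀ i j, b i j ∈ K) ∧ (∀ i j, B i j ∈ K) ∧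
      LinearIndependent K (x ∘ a) ∧ x = b *ᵥ (x ∘ a) ∧ b.submatrix a id = 1 ∧
      b.map D + b * B = A * b := by
  classical
  obtain ⟨κ, a, ha, hspan, hli⟩ := exists_linearIndependent' K x
  have := Fintype.ofInjective a ha
  have hmem (i : ι) : ∃ c : κ → K, ∑ j, c j • x (a j) = x i :=
    (Submodule.mem_span_range_iff_exists_fun K).1 (hspan ▸ Submodule.subset_span ⟨i, rfl⟩)
  choose c hc using hmem
  let b : Matrix ι κ E := .of fun i j => c i j
  have hb (i j) : b i j ∈ K := (c i j).2
  have hbx : b *ᵥ (x ∘ a) = x := funext hc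
  have hAb (i j) : (A * b) i j ∈ K := sum_mem fun l _ => mul_mem (hA i l) (hb l j)
  let B : Matrix κ κ E := (A * b).submatrix a id
  have hBx : B *ᵥ (x ∘ a) = D ∘ x ∘ a := by
    calc B *ᵥ (x ∘ a) = ((A * b) *ᵥ (x ∘ a)) ∘ a := rfl
      _ = D ∘ x ∘ a := by rw [← mulVec_mulVec, hbx, ← hx, Function.comp_assoc]
  refine ⟨κ, this, inferInstance, a, b, B, hb, fun i j => hAb _ _, hli, hbx.symm, ?_, ?_⟩
  · refine eq_of_mulVec_eq_of_linearIndependent hli (fun i j => hb _ _)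
      (one_mem K.toSubring.matrix) ?_
    calc b.submatrix a id *ᵥ (x ∘ a) = (b *ᵥ (x ∘ a)) ∘ a := rfl
      _ = 1 *ᵥ (x ∘ a) := by rw [hbx, one_mulVec]
  · refine eq_of_mulVec_eq_of_linearIndependent hli
      (fun i j => K.add_mem (hK _ (hb i j)) (sum_mem fun l _ => mul_mem (hb i l) (hAb _ _))) hAb ?_
    calc (b.map D + b * B) *ᵥ (x ∘ a) = b.map D *ᵥ (x ∘ a) + b *ᵥ (D ∘ x ∘ a) := by
          rw [add_mulVec, ← mulVec_mulVec, hBx]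
      _ = D ∘ x := by rw [← derivation_comp_mulVec, hbx]
      _ = (A * b) *ᵥ (x ∘ a) := by rw [hx, ← mulVec_mulVec, hbx]

variable [DecidableEq ι] [Fintype κ] [DecidableEq κ]

theorem exists_fundamentalMatrix_of_gauge {A Y : Matrix ι ι E} {B : Matrix κ κ E}
    {b : Matrix ι κ E} {N : Matrix κ ι E} (hY : IsUnit Y) (hDY : Y.map D = A * Y)
    (hNb : N * b = 1) (hgauge : b.map D + b * B = A * b) :
    ∃ Z : Matrix κ κ E, IsUnit Z ∧ Z.map D = B * Z := by
  have hdet := (isUnit_iff_isUnit_det Y).1 hY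
  have hDM : (Y⁻¹ * b).map D = -(Y⁻¹ * b * B) := by
    rw [map_derivation_mul, map_derivation_inv D hY, hDY, ← Matrix.mul_assoc,
      mul_nonsing_inv_cancel_right _ _ hdet, eq_sub_of_add_eq hgauge, Matrix.mul_sub,
      Matrix.neg_mul, Matrix.mul_assoc, Matrix.mul_assoc]
    abel
  have hleft : (N * Y) * (Y⁻¹ * b) = 1 := by
    rw [Matrix.mul_assoc, mul_nonsing_inv_cancel_left _ _ hdet, hNb]
  obtain ⟨s, hG⟩ := exists_isUnit_submatrix_of_mul_eq_one hleft
  set G := (Y⁻¹ * b).submatrix s id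
  have hDG : G.map D = -(G * B) := congrArg (fun M => M.submatrix s id) hDM
  have hGdet := (isUnit_iff_isUnit_det G).1 hG
  refine ⟨G⁻¹, (isUnit_nonsing_inv_iff).2 hG, ?_⟩
  rw [map_derivation_inv D hG, hDG, Matrix.mul_neg, nonsing_inv_mul_cancel_left _ _ hGdet,
    Matrix.neg_mul, neg_neg]

-- `w` is the determinant of the matrix `Z` below. In Galois terms, the columns of `b * Z` form a
-- basis of the span of the `Gal(E/K)`-orbit of `x`, so `Gal(E/K)` acts on `w` by a character.
theorem IsSplit.exists_semiinvariant (hk : ∀ x ∈ k, D x ∈ k) (hK : ∀ x ∈ K, D x ∈ K) (hkK : k ≤ K)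
    {x : ι → E} (hx : IsSplit D k x) :
    ∃ (κ : Type v) (_ : Fintype κ) (z : κ → E) (b : Matrix ι κ E) (w : E),
      LinearIndependent K z ∧ (∀ i j, b i j ∈ K) ∧ x = b *ᵥ z ∧ w ≠ 0 ∧ w ∈ dFinite D k hk ∧
      D w / w ∈ K ∧ ∀ i j, b i j * w ∈ dFinite D k hk := by
  obtain ⟨A, Y, hA, hY, hDY, hDx⟩ := hx
  obtain ⟨κ, _, _, a, b, B, hb, hB, hli, hbx, hba, hgauge⟩ :=
    exists_gauge_reduction hK (fun i j => hkK (hA i j)) hDx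
  have hselect (M : Matrix ι κ E) : (1 : Matrix ι ι E).submatrix a id * M = M.submatrix a id := by
    exact one_submatrix_mul a (Equiv.refl ι) M
  obtain ⟨Z, hZ, hDZ⟩ := exists_fundamentalMatrix_of_gauge hY hDY ((hselect b).trans hba) hgauge
  have hw : Z.det ≠ 0 := ((isUnit_iff_isUnit_det Z).1 hZ).ne_zero
  have hDX : (b * Z).map D = A * (b * Z) := by
    rw [map_derivation_mul, hDZ, ← Matrix.mul_assoc, ← Matrix.add_mul, hgauge, Matrix.mul_assoc]
  have hXmem := mem_dFinite_of_map_derivation_eq_mul (hk := hk) hA hDX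
  have hZX : Z = (b * Z).submatrix a id := by
    rw [← hselect, ← Matrix.mul_assoc, hselect, hba, Matrix.one_mul]
  have hZmem (i j) : Z i j ∈ dFinite D k hk := hZX ▸ hXmem (a i) j
  refine ⟨κ, inferInstance, x ∘ a, b, Z.det, hli, hb, hbx, hw, det_mem_of_forall_mem hZmem, ?_, ?_⟩
  · rw [derivation_det_of_map_eq_mul D hDZ, mul_div_cancel_right₀ _ hw]
    exact sum_mem fun i _ => hB i i
  · intro i j
    have hXadj : b * Z * Z.adjugate = Z.det • b := by
      rw [Matrix.mul_assoc, mul_adjugate, Matrix.mul_smul, Matrix.mul_one]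
    have hij : b i j * Z.det = ∑ l, (b * Z) i l * Z.adjugate l j := by
      rw [mul_comm]
      exact congrFun₂ hXadj.symm i j
    exact hij ▸ sum_mem fun l _ => mul_mem (hXmem i l) (adjugate_mem_of_forall_mem hZmem l j)

end GaugeReduction

section LogarithmicDerivative

theorem transcendental_div_or_transcendental_div_add_one {R F : Type*} [Field R] [Field F]
    [Algebra R F] {c g : F} (hg : Transcendental R g) (hc : c ≠ 0) :
    Transcendental R (c / g) ∨ Transcendental R (c / (g + 1)) := by
  by_contra! h
  obtain ⟨hα, hβ⟩ : IsAlgebraic R (c / g) ∧ IsAlgebraic R (c / (g + 1)) := by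
    simpa only [Transcendental, not_not] using h
  have hg0 : g ≠ 0 := fun h => hg (h ▸ isAlgebraic_zero)
  have hgeq : g = (c / g * (c / (g + 1))⁻¹ - 1)⁻¹ := by
    rw [inv_div, div_mul_div_comm, mul_comm g c, mul_div_mul_left _ _ hc]
    field_simp
    ring
  exact hg (hgeq ▸ ((hα.mul hβ.inv).sub isAlgebraic_one).inv)

variable {E : Type u} [Field E] {D : Derivation ℤ E E} {k F K : Subfield E}

theorem mem_of_mul_mem_span {κ : Type*} [Finite κ] {z : κ → E} {f Q : E} (hFK : F ≤ K)
    (hz : LinearIndependent K z) (hf : f ∈ K) (hQ0 : Q ≠ 0)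
    (hQ : Q ∈ Submodule.span F (Set.range z)) (hfQ : f * Q ∈ Submodule.span F (Set.range z)) :
    f ∈ F := by
  have := Fintype.ofFinite κ
  obtain ⟨d, hd⟩ := (Submodule.mem_span_range_iff_exists_fun F).1 hQ
  obtain ⟨c, hc⟩ := (Submodule.mem_span_range_iff_exists_fun F).1 hfQ
  have hcoeff (j : κ) : (c j : E) = f * d j := by
    have hsum : ∑ j, (⟨c j, hFK (c j).2⟩ : K) • z j =
        ∑ j, (⟨f * d j, K.mul_mem hf (hFK (d j).2)⟩ : K) • z j := by
      simp only [Subfield.smul_def, smul_eq_mul, mul_assoc, ← Finset.mul_sum] at hc hd ⊢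
      rw [hc, hd]
    exact congrArg Subtype.val (hz.eq_coords_of_eq hsum j)
  obtain ⟨j, hj⟩ : ∃ j, (d j : E) ≠ 0 := by
    by_contra! h
    exact hQ0 (hd ▸ Finset.sum_eq_zero fun j _ => by rw [Subfield.smul_def, h j, zero_smul])
  rw [eq_div_of_mul_eq hj (hcoeff j).symm]
  exact div_mem (c j).2 (d j).2

variable {ι κ : Type*} [Finite ι] [Fintype κ]

theorem mem_span_of_mem_span_mulVec {b : Matrix ι κ E} {z : κ → E} {P : E} (hkF : k ≤ F)
    (hb : ∀ i j, b i j ∈ F) (hP : P ∈ Submodule.span k (Set.range (b *ᵥ z))) :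
    P ∈ Submodule.span F (Set.range z) := by
  have := Fintype.ofFinite ι
  obtain ⟨c, rfl⟩ := (Submodule.mem_span_range_iff_exists_fun k).1 hP
  refine sum_mem fun i _ => Submodule.smul_mem _ (⟨c i, hkF (c i).2⟩ : F) (sum_mem fun j _ => ?_)
  exact Submodule.smul_mem _ (⟨b i j, hb i j⟩ : F) (Submodule.subset_span ⟨j, rfl⟩)

theorem exists_transcendental_entry {b : Matrix ι κ E} {z : κ → E} {P Q : E} (hkK : k ≤ K)
    (hb : ∀ i j, b i j ∈ K) (hz : LinearIndependent K z)
    (hP : P ∈ Submodule.span k (Set.range (b *ᵥ z)))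
    (hQ : Q ∈ Submodule.span k (Set.range (b *ᵥ z)))
    (hK : P / Q ∈ K) (htr : Transcendental k (P / Q)) : ∃ i j, Transcendental k (b i j) := by
  by_contra! h
  have hQ0 : Q ≠ 0 := fun h => htr (by rw [h, div_zero]; exact isAlgebraic_zero)
  let F : Subfield E := K ⊓ (algebraicClosure k E).toSubfield
  have hkF : k ≤ F := le_inf hkK fun c hc => (algebraicClosure k E).algebraMap_mem ⟨c, hc⟩
  have hbF (i j) : b i j ∈ F := ⟨hb i j, mem_algebraicClosure_iff.2 (not_not.1 (h i j))⟩
  have hmem : P / Q ∈ F := by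
    refine mem_of_mul_mem_span inf_le_left hz hK hQ0 (mem_span_of_mem_span_mulVec hkF hbF hQ) ?_
    rw [div_mul_cancel₀ P hQ0]
    exact mem_span_of_mem_span_mulVec hkF hbF hP
  exact htr (mem_algebraicClosure_iff.1 hmem.2)

theorem IsSplit.exists_transcendental_logDeriv [CharZero E] {ι : Type*} [Fintype ι]
    [DecidableEq ι] (hk : ∀ x ∈ k, D x ∈ k) (hK : ∀ x ∈ K, D x ∈ K) (hkK : k ≤ K)
    (hconst : ∀ x, D x = 0 → x ∈ k) {x : ι → E} {P Q : E} (hx : IsSplit D k x)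
    (hP : P ∈ Submodule.span k (Set.range x)) (hQ : Q ∈ Submodule.span k (Set.range x))
    (hPQ : P / Q ∈ K) (htr : Transcendental k (P / Q)) :
    ∃ y ≠ 0, y ∈ dFinite D k hk ∧ D y / y ∈ K ∧ Transcendental k (D y / y) := by
  obtain ⟨κ, _, z, b, w, hz, hb, rfl, hw0, hw, hDw, hbw⟩ := hx.exists_semiinvariant hk hK hkK
  by_cases hwtr : Transcendental k (D w / w)
  · exact ⟨w, hw0, hw, hDw, hwtr⟩
  have hbmem (i j) : b i j ∈ dFinite D k hk := by
    simpa only [mul_inv_cancel_right₀ hw0] using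
      mul_mem (hbw i j) (inv_mem_dFinite_of_isAlgebraic (not_not.1 hwtr))
  obtain ⟨i, j, hg⟩ := exists_transcendental_entry hkK hb hz hP hQ hPQ htr
  have hDg : D (b i j) ≠ 0 := fun h => hg (isAlgebraic_algebraMap (⟨_, hconst _ h⟩ : k))
  rcases transcendental_div_or_transcendental_div_add_one hg hDg with hlog | hlog
  · exact ⟨b i j, fun h => hg (h ▸ isAlgebraic_zero), hbmem i j,
      div_mem (hK _ (hb i j)) (hb i j), hlog⟩
  · have hD : D (b i j + 1) = D (b i j) := by rw [map_add, D.map_one_eq_zero, add_zero]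
    have hbK : b i j + 1 ∈ K := add_mem (hb i j) K.one_mem
    rw [← hD] at hlog
    refine ⟨b i j + 1, fun h => ?_, add_mem (hbmem i j) (one_mem _), div_mem (hK _ hbK) hbK, hlog⟩
    exact hlog (by rw [h, div_zero]; exact isAlgebraic_zero)

theorem exists_transcendental_logDeriv_of_isPV [CharZero E] (hPV : IsPV D k ⊤)
    (hk : ∀ x ∈ k, D x ∈ k) (hK : ∀ x ∈ K, D x ∈ K) (hkK : k ≤ K) {f : E} (hfK : f ∈ K)
    (hf : Transcendental k f) :
    ∃ y ≠ 0, y ∈ dFinite D k hk ∧ D y / y ∈ K ∧ Transcendental k (D y / y) := by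
  obtain ⟨n, A, Y, hA, hY, hDY, htop⟩ := exists_fundamentalMatrix_of_isPV hPV
  obtain ⟨-, -, -, -, -, hconst, -⟩ := hPV
  obtain ⟨P, hP, Q, hQ, rfl⟩ := exists_eq_div_of_fundamentalMatrix hA hY hDY htop f
  obtain ⟨ι, _, _, x, hx, hPx, hQx⟩ := exists_isSplit_of_mem_splitRing hP hQ
  exact hx.exists_transcendental_logDeriv hk hK hkK (fun c => hconst c trivial) hPx hQx hfK hf

end LogarithmicDerivative

section TranscendenceDegree

variable {E : Type u} [Field E] {k F K : Subfield E}

theorem exists_transcendental_of_one_le_trdegOf (h : 1 ≤ trdegOf k K) :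
    ∃ f ∈ K, Transcendental k f := by
  by_contra! halg
  have hle : trdegOf k K ≤ 0 := ciSup_le' fun ⟨s, hsK, hs⟩ => by
    have hempty : s = ∅ := Set.eq_empty_of_forall_notMem fun x hx =>
      halg x (hsK hx) (hs.transcendental ⟨x, hx⟩)
    exact (Cardinal.mk_set_eq_zero_iff.2 hempty).le
  exact one_ne_zero (nonpos_iff_eq_zero.1 (h.trans hle))

theorem trdegOf_add_one_le {x : E} (hkF : k ≤ F) (hFK : F ≤ K) (hx : x ∈ K)
    (htr : Transcendental F x) : trdegOf k F + 1 ≤ trdegOf k K := by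
  have : Nonempty {s : Set E // s ⊆ (F : Set E) ∧ AlgebraicIndependent k (fun x : s => (x : E))} :=
    ⟨∅, Set.empty_subset _,
      algebraicIndependent_empty_type_iff.2 (algebraMap k E).injective⟩
  rw [trdegOf, Cardinal.ciSup_add _ Cardinal.bddAbove_of_small]
  refine ciSup_le' fun ⟨s, hsF, hs⟩ => ?_
  let F' : IntermediateField k E := F.toIntermediateField fun c => hkF c.2
  have hadjoin : Algebra.adjoin k s ≤ F'.toSubalgebra := Algebra.adjoin_le hsF
  have hxs : x ∉ s := fun h => htr (isAlgebraic_algebraMap (⟨x, hsF h⟩ : F))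
  have hins : AlgebraicIndepOn k id (insert x s) := by
    refine AlgebraicIndepOn.insert hs fun hal => htr ?_
    rw [Set.image_id] at hal
    exact hal.tower_top_of_subalgebra_le hadjoin
  have hle : Cardinal.mk (insert x s : Set E) ≤ trdegOf k K :=
    le_ciSup (f := fun s : {s : Set E // s ⊆ (K : Set E) ∧
      AlgebraicIndependent k (fun x : s => (x : E))} => Cardinal.mk s.1)
      Cardinal.bddAbove_of_small ⟨_, Set.insert_subset hx (hsF.trans hFK), hins⟩
  rwa [Cardinal.mk_insert hxs] at hle

theorem trdegOf_lt_aleph0 [Algebra.EssFiniteType k E] : trdegOf k K < Cardinal.aleph0 :=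
  (ciSup_le' fun s => s.2.2.cardinalMk_le_trdeg).trans_lt (trdeg_lt_aleph0 k E)

theorem trdegOf_ne_zero {x : E} (hkK : k ≤ K) (hx : x ∈ K) (htr : Transcendental k x) :
    trdegOf k K ≠ 0 :=
  Cardinal.one_le_iff_ne_zero.1 (le_add_self.trans (trdegOf_add_one_le le_rfl hkK hx htr))

theorem isAlgebraic_of_trdegOf_eq (hkF : k ≤ F) (hFK : F ≤ K) (heq : trdegOf k F = trdegOf k K)
    (hfin : trdegOf k K < Cardinal.aleph0) {x : E} (hx : x ∈ K) : IsAlgebraic F x := by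
  by_contra htr
  have hle := trdegOf_add_one_le hkF hFK hx htr
  lift trdegOf k K to ℕ using hfin with d
  rw [heq] at hle
  norm_cast at hle
  exact hle.not_gt d.lt_succ_self

theorem finite_of_isAlgebraic [CharZero E] {D : Derivation ℤ E E} {M : Subfield E}
    (hM : ∀ x ∈ M, D x ∈ M) (hkM : k ≤ M) (hMK : M ≤ K) {s : Set E} (hs : s.Finite)
    (hgen : diffGen D k s = K) (halg : ∀ x ∈ K, IsAlgebraic M x) :
    letI : Algebra M K := (Subfield.inclusion hMK).toAlgebra
    Module.Finite M K := by
  let : Algebra M K := (Subfield.inclusion hMK).toAlgebra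
  have hsK : s ⊆ K := hgen ▸ subset_diffGen D k s
  have : Finite s := hs
  have : FiniteDimensional M (adjoin M s) :=
    finiteDimensional_adjoin fun x hx => (halg x (hsK hx)).isIntegral
  have hle : K ≤ (adjoin M s).toSubfield := by
    rw [← hgen]
    exact diffGen_le_adjoin hkM hM (subset_adjoin M s) fun x hx =>
      derivation_mem_of_isAlgebraic hM (subset_adjoin M s hx) (halg x (hsK hx))
  let φ : K →ₗ[M] adjoin M s :=
    { toFun := Subfield.inclusion hle
      map_add' := map_add _
      map_smul' _ _ := rfl }
  exact Module.Finite.of_injective φ (Subfield.inclusion hle).injective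

end TranscendenceDegree

theorem stmt0_general {E : Type u} [Field E] [CharZero E] (D : Derivation ℤ E E)
    (k K : Subfield E) (hPV : IsPV (⇑D) k ⊤) (hirr : IsIrred (⇑D) k K) :
    ∃ y : E, y ≠ 0 ∧
      (∃ (n : ℕ) (a : Fin n → E), (∀ i, a i ∈ k) ∧ LApply (⇑D) n a y = 0) ∧
      D y / y ∈ K ∧
      ∃ h : diffGen (⇑D) k {D y / y} ≤ K,
        letI : Algebra ↥(diffGen (⇑D) k {D y / y}) ↥K := (Subfield.inclusion h).toAlgebra
        Module.Finite ↥(diffGen (⇑D) k {D y / y}) ↥K ∧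
          Algebra.IsAlgebraic ↥(diffGen (⇑D) k {D y / y}) ↥K := by
  have ⟨_, _, _, hk, _⟩ := hPV
  obtain ⟨⟨s, hs⟩, htrdeg, hmax⟩ := hirr
  have hkK : k ≤ K := hs ▸ le_diffGen D k s
  have hK (x : E) (hx : x ∈ K) : D x ∈ K := hs ▸ apply_mem_diffGen (hs.symm ▸ hx)
  obtain ⟨f, hfK, hf⟩ := exists_transcendental_of_one_le_trdegOf htrdeg
  obtain ⟨y, hy0, hy, hyK, hytr⟩ := exists_transcendental_logDeriv_of_isPV hPV hk hK hkK hfK hf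
  have hyM : D y / y ∈ diffGen D k {D y / y} := subset_diffGen D k _ rfl
  have hkM : k < diffGen D k {D y / y} := SetLike.lt_iff_le_and_exists.2
    ⟨le_diffGen D k _, _, hyM, fun h => hytr (isAlgebraic_algebraMap (⟨_, h⟩ : k))⟩
  have hMK : diffGen D k {D y / y} ≤ K := diffGen_le hkK (Set.singleton_subset_iff.2 hyK) hK
  have hM (x : E) (hx : x ∈ diffGen D k {D y / y}) : D x ∈ diffGen D k {D y / y} :=
    apply_mem_diffGen hx
  have heq := (hmax _ hM hkM hMK).resolve_left (trdegOf_ne_zero hkM.le hyM hytr)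
  let : Algebra (diffGen D k {D y / y}) K := (Subfield.inclusion hMK).toAlgebra
  have := essFiniteType_of_isPV hPV
  have hfin := finite_of_isAlgebraic hM hkM.le hMK s.finite_toSet hs fun x hx =>
    isAlgebraic_of_trdegOf_eq hkM.le hMK heq trdegOf_lt_aleph0 hx
  exact ⟨y, hy0, exists_LApply_eq_zero_of_mem_dFinite hy, hyK, hMK, hfin, .of_finite _ _⟩

/-- Let `k ⊂ K ⊆ E` be differential fields with algebraically closed field
of constants `C` of `k`, `E` a Picard–Vessiot extension of `k` and `K` `k`-irreducible.
Then there are a nonzero `y ∈ E` and a monic linear differential operator `L` over `k`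
with `L(y) = 0`, `y'/y ∈ K`, and `K` a finite algebraic extension of `k⟨y'/y⟩`. -/
theorem stmt0 {E : Type u} [Field E] [CharZero E] (D : Derivation ℤ E E)
    (k K : Subfield E)
    (hk : ∀ x ∈ k, D x ∈ k) (hK : ∀ x ∈ K, D x ∈ K)
    (hC : IsAlgClosed ↥(constantsOf D k))
    (hkK : k < K)
    (hPV : IsPV (⇑D) k ⊤)
    (hirr : IsIrred (⇑D) k K) :
    ∃ y : E, y ≠ 0 ∧
      (∃ (n : ℕ) (a : Fin n → E), (∀ i, a i ∈ k) ∧ LApply (⇑D) n a y = 0) ∧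
      D y / y ∈ K ∧
      ∃ h : diffGen (⇑D) k {D y / y} ≤ K,
        letI : Algebra ↥(diffGen (⇑D) k {D y / y}) ↥K := (Subfield.inclusion h).toAlgebra
        Module.Finite ↥(diffGen (⇑D) k {D y / y}) ↥K ∧
          Algebra.IsAlgebraic ↥(diffGen (⇑D) k {D y / y}) ↥K :=
  stmt0_general D k K hPV hirr
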